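/- arXiv:2007.09783 — 2 statements merged into one kernel-verified Lean document; each statement's English description precedes it below -/
import Mathlib

section
/- Let $A$ be a unital C*-algebra, let $G$ be a finite group, and let $\alpha: G \to \mathrm{Aut}(A)$ be strictly approximately inner. If $A$ is stably finite, then the radius of comparison satisfies $\mathrm{rc}(A) \leq \mathrm{rc}(C^*(G, A, \alpha))$. -/
open Filter Topology
open scoped ENNReal

/-- Cuntz subequivalence. -/
def CuntzSub {B : Type*} [Mul B] [Star B] [TopologicalSpace B] (a b : B) : Prop :=
  ∃ c : ℕ → B, Tendsto (fun n => c n * b * star (c n)) atTop (𝓝 a)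

/-- The defining conditions (a)-(c) of a quasitrace (Definition 2.3 of the paper):
`ρ(a*a) = ρ(aa*) ≥ 0`, `ρ(b + ic) = ρ(b) + iρ(c)` for self-adjoint `b, c`, and linearity on
commuting self-adjoint elements (i.e. on commutative C*-subalgebras). -/
def IsQuasitraceFun {B : Type*} [NonUnitalRing B] [StarRing B] [Module ℂ B]
    (ρ : B → ℂ) : Prop :=
  (∀ a : B, ρ (star a * a) = ρ (a * star a)) ∧
  (∀ a : B, 0 ≤ (ρ (star a * a)).re ∧ (ρ (star a * a)).im = 0) ∧
  (∀ b c : B, IsSelfAdjoint b → IsSelfAdjoint c →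
    ρ (b + Complex.I • c) = ρ b + Complex.I * ρ c) ∧
  (∀ b c : B, IsSelfAdjoint b → IsSelfAdjoint c → b * c = c * b →
    ρ (b + c) = ρ b + ρ c) ∧
  (∀ (r : ℝ) (b : B), IsSelfAdjoint b → ρ ((r : ℂ) • b) = (r : ℂ) * ρ b)

/-- `a ⊗ e₁₁ ∈ M₂(B)`. -/
def cornerEmbed {B : Type*} [Zero B] (a : B) : Matrix (Fin 2) (Fin 2) B :=
  Matrix.of fun i j => if i = 0 ∧ j = 0 then a else 0

/-- A quasitrace: a quasitrace functional that extends to `M₂(B)` (condition (d) of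
Definition 2.3). -/
def IsQuasitrace {B : Type*} [NonUnitalRing B] [StarRing B] [Module ℂ B]
    (ρ : B → ℂ) : Prop :=
  IsQuasitraceFun ρ ∧ ∃ ρ₂ : Matrix (Fin 2) (Fin 2) B → ℂ,
    IsQuasitraceFun ρ₂ ∧ ∀ a : B, ρ₂ (cornerEmbed a) = ρ a

/-- The canonical embedding `M_n(B) → M_{n+1}(B)` (padding with zeros). -/
def matEmbed {B : Type*} [Zero B] {n : ℕ} (a : Matrix (Fin n) (Fin n) B) :
    Matrix (Fin (n + 1)) (Fin (n + 1)) B :=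
  Matrix.of fun i j =>
    if h : (i : ℕ) < n ∧ (j : ℕ) < n then a ⟨i, h.1⟩ ⟨j, h.2⟩ else 0

/-- A normalized quasitrace on `B`, together with its (compatible) extensions to all matrix
algebras `M_n(B)`, i.e. to `M_∞(B)`. -/
structure QTSeq (B : Type*) [Ring B] [StarRing B] [Module ℂ B] where
  ρ : ∀ n : ℕ, Matrix (Fin n) (Fin n) B → ℂ
  quasi : ∀ n, IsQuasitrace (ρ n)
  compat : ∀ (n : ℕ) (a : Matrix (Fin n) (Fin n) B), ρ (n + 1) (matEmbed a) = ρ n a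
  normalized : ρ 1 1 = 1

/-- `HasDim ρ a d` expresses `d_ρ(a) = lim_k ρ(a^{1/k}) = d`: there is a sequence of positive
`(k+1)`-st roots `f k` of `a` with `ρ(f k) → d`. -/
def HasDim {M : Type*} [Monoid M] [Star M] (ρ : M → ℂ) (a : M) (d : ℝ) : Prop :=
  ∃ f : ℕ → M, (∀ k : ℕ, (∃ c : M, f k = star c * c) ∧ (f k) ^ (k + 1) = a) ∧
    Tendsto (fun k => (ρ (f k)).re) atTop (𝓝 d)

/-- `B` has `r`-comparison: whenever `a, b ∈ M_∞(B)₊` satisfy `d_ρ(a) + r < d_ρ(b)` for all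
normalized quasitraces `ρ`, then `a ≾ b`. -/
def RComparison (B : Type*) [Ring B] [StarRing B] [Module ℂ B] [TopologicalSpace B]
    (r : ℝ) : Prop :=
  ∀ (n : ℕ) (a b : Matrix (Fin n) (Fin n) B),
    (∃ c : Matrix (Fin n) (Fin n) B, a = star c * c) →
    (∃ c : Matrix (Fin n) (Fin n) B, b = star c * c) →
    (∀ (ρ : QTSeq B) (da db : ℝ), HasDim (ρ.ρ n) a da → HasDim (ρ.ρ n) b db →
      da + r < db) →
    CuntzSub a b

/-- The radius of comparison of `B`: the infimum of the `r ≥ 0` such that `B` has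
`r`-comparison (`⊤` if there is none). -/
noncomputable def radiusOfComparison (B : Type*) [Ring B] [StarRing B] [Module ℂ B]
    [TopologicalSpace B] : ℝ≥0∞ :=
  sInf {x : ℝ≥0∞ | ∃ r : ℝ, 0 ≤ r ∧ x = ENNReal.ofReal r ∧ RComparison B r}

/-- `B` is stably finite: one-sided inverses in matrix algebras over `B` are two-sided. -/
def StablyFinite (B : Type*) [Ring B] [StarRing B] : Prop :=
  ∀ (n : ℕ) (x : Matrix (Fin n) (Fin n) B), star x * x = 1 → x * star x = 1

/-- A realization of the crossed product `C*(G, A, α)` of a finite group action. -/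
structure CrossedProduct (G : Type*) [Group G] [Fintype G]
    (A B : Type*) [CStarAlgebra A] [CStarAlgebra B] (α : G → A → A) where
  ι : A →⋆ₐ[ℂ] B
  u : G → B
  u_mul : ∀ g h : G, u g * u h = u (g * h)
  u_star : ∀ g : G, star (u g) = u g⁻¹
  u_one : u 1 = 1
  ι_isometry : ∀ a : A, ‖ι a‖ = ‖a‖
  covariant : ∀ (g : G) (a : A), u g * ι a * star (u g) = ι (α g a)
  spans : ∀ b : B, ∃ f : G → A, b = ∑ g : G, ι (f g) * u g
  coeff_norm_le : ∀ (f : G → A) (g : G), ‖f g‖ ≤ ‖∑ h : G, ι (f h) * u h‖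

/-- Strict approximate innerness of an action of a finite group on a unital C*-algebra. -/
def StrictlyApproxInner {G : Type*} [Group G] {A : Type*} [CStarAlgebra A]
    (α : G → A → A) : Prop :=
  ∀ (F : Finset A) (ε : ℝ), 0 < ε → ∃ z : G →* unitary A,
    ∀ g : G, ∀ a ∈ F, ‖α g a - (z g : A) * a * star ((z g : A))‖ < ε

section Roots

lemma root_exists_unique {C : Type*} [CStarAlgebra C] (a : C) (ha : ∃ c : C, a = star c * c)
    (k : ℕ) : (∃ f : C, (∃ c : C, f = star c * c) ∧ f ^ (k + 1) = a) ∧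
    ∀ f f' : C, (∃ c : C, f = star c * c) → (∃ c : C, f' = star c * c) →
      f ^ (k + 1) = f' ^ (k + 1) → f = f' := by
  letI : PartialOrder C := CStarAlgebra.spectralOrder C
  haveI : StarOrderedRing C := CStarAlgebra.spectralOrderedRing C
  have key : ∀ f : C, 0 ≤ f → (f ^ (k + 1)) ^ (((k : ℝ) + 1)⁻¹) = f := by
    intro f hf
    have := CFC.rpow_natCast f (k + 1) hf
    rw [← this, CFC.rpow_rpow_of_exponent_nonneg _ _ _ (by positivity) (by positivity)]
    have h : ((k + 1 : ℕ) : ℝ) * ((k : ℝ) + 1)⁻¹ = 1 := by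
      push_cast
      field_simp
    rw [h, CFC.rpow_one _ hf]
  refine ⟨?_, ?_⟩
  · obtain ⟨c, rfl⟩ := ha
    have hp : 0 ≤ star c * c := star_mul_self_nonneg c
    refine ⟨(star c * c) ^ (((k : ℝ) + 1)⁻¹), ?_, ?_⟩
    · exact CStarAlgebra.nonneg_iff_eq_star_mul_self.mp CFC.rpow_nonneg
    · rw [← CFC.rpow_natCast _ _ CFC.rpow_nonneg,
        CFC.rpow_rpow_of_exponent_nonneg _ _ _ (by positivity) (by positivity)]
      have h : ((k : ℝ) + 1)⁻¹ * ((k + 1 : ℕ) : ℝ) = 1 := by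
        push_cast
        field_simp
      rw [h, CFC.rpow_one _ hp]
  · rintro f f' ⟨c, rfl⟩ ⟨c', rfl⟩ h
    rw [← key (star c * c) (star_mul_self_nonneg c), h, key _ (star_mul_self_nonneg c')]

lemma matrix_root_exists_unique {A : Type*} [CStarAlgebra A] {n : ℕ}
    (a : Matrix (Fin n) (Fin n) A) (ha : ∃ c : Matrix (Fin n) (Fin n) A, a = star c * c)
    (k : ℕ) :
    (∃ f : Matrix (Fin n) (Fin n) A,
      (∃ c : Matrix (Fin n) (Fin n) A, f = star c * c) ∧ f ^ (k + 1) = a) ∧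
    ∀ f f' : Matrix (Fin n) (Fin n) A, (∃ c : Matrix (Fin n) (Fin n) A, f = star c * c) →
      (∃ c : Matrix (Fin n) (Fin n) A, f' = star c * c) →
      f ^ (k + 1) = f' ^ (k + 1) → f = f' := by
  letI : PartialOrder A := CStarAlgebra.spectralOrder A
  haveI : StarOrderedRing A := CStarAlgebra.spectralOrderedRing A
  exact root_exists_unique (C := CStarMatrix (Fin n) (Fin n) A) a ha k

end Roots

section Restrict

lemma IsQuasitraceFun.comp' {M N : Type*} [NonUnitalRing M] [StarRing M] [Module ℂ M]
    [NonUnitalRing N] [StarRing N] [Module ℂ N] {ρ : N → ℂ} (h : IsQuasitraceFun ρ)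
    (φ : M → N) (hadd : ∀ x y, φ (x + y) = φ x + φ y) (hmul : ∀ x y, φ (x * y) = φ x * φ y)
    (hstar : ∀ x, φ (star x) = star (φ x)) (hsmul : ∀ (c : ℂ) x, φ (c • x) = c • φ x) :
    IsQuasitraceFun (fun x => ρ (φ x)) := by
  obtain ⟨h1, h2, h3, h4, h5⟩ := h
  have hsa : ∀ x, IsSelfAdjoint x → IsSelfAdjoint (φ x) := by
    intro x hx
    rw [IsSelfAdjoint, ← hstar, hx.star_eq]
  refine ⟨?_, ?_, ?_, ?_, ?_⟩
  · intro a
    simp only [hmul, hstar, h1]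
  · intro a
    simp only [hmul, hstar]
    exact h2 _
  · intro b c hb hc
    simp only [hadd, hsmul]
    exact h3 _ _ (hsa _ hb) (hsa _ hc)
  · intro b c hb hc hbc
    simp only [hadd]
    exact h4 _ _ (hsa _ hb) (hsa _ hc) (by rw [← hmul, hbc, hmul])
  · intro r b hb
    simp only [hsmul]
    exact h5 r _ (hsa _ hb)

variable {A B : Type*} [CStarAlgebra A] [CStarAlgebra B]

lemma mapMul (ι : A →⋆ₐ[ℂ] B) {n : ℕ} (x y : Matrix (Fin n) (Fin n) A) :
    (x * y).map ι = x.map ι * y.map ι := Matrix.map_mul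

lemma mapStar (ι : A →⋆ₐ[ℂ] B) {n : ℕ} (x : Matrix (Fin n) (Fin n) A) :
    (star x).map ι = star (x.map ι) := by
  ext i j
  simp [Matrix.star_apply, map_star]

lemma mapPow (ι : A →⋆ₐ[ℂ] B) {n : ℕ} (x : Matrix (Fin n) (Fin n) A) (k : ℕ) :
    (x ^ k).map ι = (x.map ι) ^ k := by
  induction k with
  | zero => simp
  | succ k ih => rw [pow_succ, pow_succ, mapMul, ih]

lemma mapAdd (ι : A →⋆ₐ[ℂ] B) {n : ℕ} (x y : Matrix (Fin n) (Fin n) A) :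
    (x + y).map ι = x.map ι + y.map ι := by
  ext i j
  simp

lemma mapSmul (ι : A →⋆ₐ[ℂ] B) {n : ℕ} (c : ℂ) (x : Matrix (Fin n) (Fin n) A) :
    (c • x).map ι = c • x.map ι := by
  ext i j
  simp

/-- Restriction of a quasitrace along a unital star homomorphism. -/
def QTSeq.restrict (σ : QTSeq B) (ι : A →⋆ₐ[ℂ] B) : QTSeq A where
  ρ n a := σ.ρ n (a.map ι)
  quasi n := by
    obtain ⟨h, ρ₂, h₂, hc⟩ := σ.quasi n
    refine ⟨h.comp' _ (mapAdd ι) (mapMul ι) (mapStar ι) (mapSmul ι),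
      fun x => ρ₂ (x.map fun y => y.map ι), h₂.comp' _ ?_ ?_ ?_ ?_, ?_⟩
    · intro x y
      ext i j : 2
      simp [mapAdd]
    · intro x y
      ext i j : 2
      simp [Matrix.mul_apply, mapAdd, mapMul]
    · intro x
      ext i j : 2
      simp [Matrix.star_apply, map_star]
    · intro c x
      ext i j : 2
      simp [mapSmul]
    · intro a
      change ρ₂ _ = σ.ρ n _
      rw [← hc]
      congr 1
      ext i j : 2
      simp only [cornerEmbed, Matrix.map_apply, Matrix.of_apply]
      split_ifs
      · rfl
      · simp
  compat n a := by
    have : (matEmbed a).map ι = matEmbed (a.map ι) := by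
      ext i j
      simp only [matEmbed, Matrix.map_apply, Matrix.of_apply]
      split_ifs <;> simp
    rw [this, σ.compat]
  normalized := by
    have : (1 : Matrix (Fin 1) (Fin 1) A).map ι = 1 := by simp
    rw [this, σ.normalized]

lemma hasDim_restrict (σ : QTSeq B) (ι : A →⋆ₐ[ℂ] B) {n : ℕ} (a : Matrix (Fin n) (Fin n) A)
    (ha : ∃ c : Matrix (Fin n) (Fin n) A, a = star c * c) (d : ℝ)
    (h : HasDim (σ.ρ n) (a.map ι) d) : HasDim ((σ.restrict ι).ρ n) a d := by
  obtain ⟨f, hf, hlim⟩ := h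
  choose g hg using fun k => (matrix_root_exists_unique a ha k).1
  refine ⟨g, hg, ?_⟩
  have hfg : ∀ k, f k = (g k).map ι := by
    intro k
    refine (matrix_root_exists_unique (a.map ι) ?_ k).2 _ _ (hf k).1 ?_ ?_
    · obtain ⟨c, rfl⟩ := ha
      exact ⟨c.map ι, by rw [mapMul, mapStar]⟩
    · obtain ⟨c, hc⟩ := (hg k).1
      exact ⟨c.map ι, by rw [hc, mapMul, mapStar]⟩
    · rw [(hf k).2, ← mapPow, (hg k).2]
  simp only [hfg] at hlim
  exact hlim

end Restrict

section Descent

variable {G : Type*} [Group G] [Fintype G] {A B : Type*} [CStarAlgebra A] [CStarAlgebra B]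
  {α : G → A → A}

/-- The linear map `f ↦ ∑ f_g u_g`. -/
def CrossedProduct.E (cp : CrossedProduct G A B α) : (G → A) →ₗ[ℂ] B where
  toFun f := ∑ g, cp.ι (f g) * cp.u g
  map_add' f h := by simp [add_mul, Finset.sum_add_distrib]
  map_smul' c f := by simp [Finset.smul_sum]

lemma CrossedProduct.E_bij (cp : CrossedProduct G A B α) : Function.Bijective cp.E := by
  constructor
  · rw [injective_iff_map_eq_zero]
    intro f hf
    ext g
    have h := cp.coeff_norm_le f g
    have h0 : ∑ h : G, cp.ι (f h) * cp.u h = 0 := hf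
    rw [h0, norm_zero] at h
    simpa using h
  · intro b
    obtain ⟨f, hf⟩ := cp.spans b
    exact ⟨f, hf.symm⟩

/-- The linear map `f ↦ ∑ f_g z_g`. -/
def evalZ (z : G →* unitary A) : (G → A) →ₗ[ℂ] A where
  toFun f := ∑ g, f g * (z g : A)
  map_add' f h := by simp [add_mul, Finset.sum_add_distrib]
  map_smul' c f := by simp [Finset.smul_sum]

/-- The map `∑ f_g u_g ↦ ∑ f_g z_g`. -/
noncomputable def CrossedProduct.Phi (cp : CrossedProduct G A B α) (z : G →* unitary A) :
    B →ₗ[ℂ] A :=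
  (evalZ z).comp (LinearEquiv.ofBijective cp.E cp.E_bij).symm.toLinearMap

lemma CrossedProduct.Phi_E (cp : CrossedProduct G A B α) (z : G →* unitary A) (f : G → A) :
    cp.Phi z (cp.E f) = ∑ g, f g * (z g : A) := by
  have : (LinearEquiv.ofBijective cp.E cp.E_bij).symm (cp.E f) = f :=
    (LinearEquiv.ofBijective cp.E cp.E_bij).symm_apply_apply f
  simp only [CrossedProduct.Phi, LinearMap.comp_apply, LinearEquiv.coe_coe, this]
  rfl

lemma CrossedProduct.Phi_mono (cp : CrossedProduct G A B α) (z : G →* unitary A) (a : A) (g : G) :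
    cp.Phi z (cp.ι a * cp.u g) = a * (z g : A) := by
  classical
  have h : cp.ι a * cp.u g = cp.E (Pi.single g a) := by
    change _ = ∑ h, cp.ι ((Pi.single g a : G → A) h) * cp.u h
    rw [Finset.sum_eq_single g]
    · simp
    · intro b _ hb
      simp [Pi.single_eq_of_ne hb]
    · simp
  rw [h, CrossedProduct.Phi_E, Finset.sum_eq_single g]
  · simp
  · intro b _ hb
    simp [Pi.single_eq_of_ne hb]
  · simp

lemma CrossedProduct.Phi_iota (cp : CrossedProduct G A B α) (z : G →* unitary A) (a : A) :
    cp.Phi z (cp.ι a) = a := by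
  have := cp.Phi_mono z a 1
  simpa [cp.u_one] using this

lemma CrossedProduct.Phi_norm (cp : CrossedProduct G A B α) (z : G →* unitary A) (x : B) :
    ‖cp.Phi z x‖ ≤ Fintype.card G * ‖x‖ := by
  obtain ⟨f, rfl⟩ := cp.E_bij.2 x
  rw [cp.Phi_E]
  refine (norm_sum_le _ _).trans ?_
  refine (Finset.sum_le_card_nsmul _ _ ‖cp.E f‖ ?_).trans (by simp)
  intro g _
  rw [CStarRing.norm_mul_coe_unitary]
  exact cp.coeff_norm_le f g

lemma exists_filter (hs : StrictlyApproxInner α) :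
    ∃ l : Filter (G →* unitary A), l.NeBot ∧ ∀ (g : G) (a : A),
      Tendsto (fun z : G →* unitary A => (z g : A) * a * star (z g : A)) l (𝓝 (α g a)) := by
  classical
  choose! z hz using hs
  refine ⟨Filter.map (fun p : Finset A × ℕ => z p.1 (1 / ((p.2 : ℝ) + 1))) atTop, inferInstance, ?_⟩
  intro g a
  rw [Filter.tendsto_map'_iff, tendsto_iff_norm_sub_tendsto_zero]
  have hlim : Tendsto (fun p : Finset A × ℕ => 1 / ((p.2 : ℝ) + 1)) atTop (𝓝 0) := by
    rw [← prod_atTop_atTop_eq]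
    exact tendsto_one_div_add_atTop_nhds_zero_nat.comp tendsto_snd
  refine squeeze_zero' (Eventually.of_forall fun _ => norm_nonneg _) ?_ hlim
  filter_upwards [eventually_ge_atTop (({a} : Finset A), 0)] with p hp
  have := hz p.1 (1 / ((p.2 : ℝ) + 1)) (by positivity) g a (hp.1 (by simp))
  rw [norm_sub_rev]
  exact this.le

lemma CrossedProduct.u_inv_mul (cp : CrossedProduct G A B α) (g : G) :
    star (cp.u g) * cp.u g = 1 := by
  rw [cp.u_star, cp.u_mul, inv_mul_cancel, cp.u_one]

lemma CrossedProduct.comm (cp : CrossedProduct G A B α) (g : G) (a : A) :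
    cp.u g * cp.ι a = cp.ι (α g a) * cp.u g := by
  rw [← cp.covariant, mul_assoc, cp.u_inv_mul, mul_one]

lemma CrossedProduct.mono_tendsto (cp : CrossedProduct G A B α) {l : Filter (G →* unitary A)}
    (hl : ∀ (g : G) (a : A),
      Tendsto (fun z : G →* unitary A => (z g : A) * a * star (z g : A)) l (𝓝 (α g a)))
    (f b h : A) (g k : G) :
    Tendsto (fun z => cp.Phi z (cp.ι f * cp.u g * cp.ι b * star (cp.ι h * cp.u k)) -
      f * (z g : A) * b * star (h * (z k : A))) l (𝓝 0) := by
  have e1 : cp.ι f * cp.u g * cp.ι b * star (cp.ι h * cp.u k) =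
      cp.ι (f * α g b * α (g * k⁻¹) (star h)) * cp.u (g * k⁻¹) := by
    rw [star_mul, cp.u_star, mul_assoc (cp.ι f), cp.comm, ← map_star]
    have : cp.u g * (cp.u k⁻¹ * cp.ι (star h)) =
        cp.ι (α (g * k⁻¹) (star h)) * cp.u (g * k⁻¹) := by
      rw [← mul_assoc, cp.u_mul, cp.comm]
    simp only [mul_assoc, this, map_mul]
  have e2 : ∀ z : G →* unitary A, f * (z g : A) * b * star (h * (z k : A)) =
      f * (((z g : A) * b * star (z g : A)) *
        ((z (g * k⁻¹) : A) * star h * star (z (g * k⁻¹) : A))) * (z (g * k⁻¹) : A) := by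
    intro z
    have h1 : star (z (g * k⁻¹) : A) * (z (g * k⁻¹) : A) = 1 := Unitary.coe_star_mul_self _
    have h2 : star (z g : A) * (z (g * k⁻¹) : A) = star (z k : A) := by
      rw [map_mul, map_inv, Submonoid.coe_mul, ← mul_assoc, Unitary.coe_star_mul_self, one_mul]
      rfl
    simp only [mul_assoc, h1, mul_one, star_mul]
    rw [← mul_assoc (star (z g : A)), h2]
  have hD : Tendsto (fun z : G →* unitary A => f * (α g b * α (g * k⁻¹) (star h)) -
      f * (((z g : A) * b * star (z g : A)) *
        ((z (g * k⁻¹) : A) * star h * star (z (g * k⁻¹) : A)))) l (𝓝 0) := by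
    have := ((hl g b).mul (hl (g * k⁻¹) (star h))).const_mul f
    have := this.const_sub (f * (α g b * α (g * k⁻¹) (star h)))
    simpa using this
  rw [tendsto_zero_iff_norm_tendsto_zero] at hD ⊢
  refine hD.congr fun z => ?_
  rw [e1, cp.Phi_mono, e2, mul_assoc f, ← sub_mul, CStarRing.norm_mul_coe_unitary]

lemma CrossedProduct.triple_tendsto (cp : CrossedProduct G A B α) {l : Filter (G →* unitary A)}
    (hl : ∀ (g : G) (a : A),
      Tendsto (fun z : G →* unitary A => (z g : A) * a * star (z g : A)) l (𝓝 (α g a)))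
    (x y : B) (b : A) :
    Tendsto (fun z => cp.Phi z (x * cp.ι b * star y) -
      cp.Phi z x * b * star (cp.Phi z y)) l (𝓝 0) := by
  obtain ⟨f, rfl⟩ := cp.spans x
  obtain ⟨h, rfl⟩ := cp.spans y
  have := tendsto_finsetSum Finset.univ fun g (_ : g ∈ Finset.univ) =>
    tendsto_finsetSum Finset.univ fun k (_ : k ∈ Finset.univ) =>
      cp.mono_tendsto hl (f g) b (h k) g k
  simp only [Finset.sum_const_zero] at this
  refine this.congr fun z => ?_
  simp only [map_sum, cp.Phi_mono, star_sum, Finset.sum_mul, Finset.mul_sum,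
    Finset.sum_sub_distrib]
  congr 1
  · rw [Finset.sum_comm]
  · rw [Finset.sum_comm]

lemma triple_apply {R : Type*} [Ring R] [StarRing R] {n : ℕ} (c b : Matrix (Fin n) (Fin n) R)
    (i j : Fin n) :
    (c * b * star c) i j = ∑ k, ∑ l, c i l * b l k * star (c j k) := by
  simp [Matrix.mul_apply, Matrix.star_apply, Finset.sum_mul]

lemma CrossedProduct.descend (cp : CrossedProduct G A B α) (hs : StrictlyApproxInner α) {n : ℕ}
    (a b : Matrix (Fin n) (Fin n) A) (h : CuntzSub (a.map cp.ι) (b.map cp.ι)) :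
    CuntzSub a b := by
  obtain ⟨l, hne, hl⟩ := exists_filter hs
  obtain ⟨c, hc⟩ := h
  have hc' : ∀ i j, Tendsto (fun m => (c m * b.map cp.ι * star (c m)) i j) atTop
      (𝓝 (cp.ι (a i j))) := by
    intro i j
    have := (tendsto_pi_nhds.1 ((tendsto_pi_nhds.1 hc) i)) j
    exact this
  have key : ∀ ε : ℝ, 0 < ε → ∃ d : Matrix (Fin n) (Fin n) A, ∀ i j,
      ‖(d * b * star d) i j - a i j‖ ≤ ε := by
    intro ε hε
    have hN : (0 : ℝ) < Fintype.card G := by exact_mod_cast Fintype.card_pos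
    have hm : ∀ᶠ m in atTop, ∀ i j, ‖(c m * b.map cp.ι * star (c m)) i j - cp.ι (a i j)‖ <
        ε / 2 / Fintype.card G := by
      rw [eventually_all]
      intro i
      rw [eventually_all]
      intro j
      have := tendsto_iff_norm_sub_tendsto_zero.1 (hc' i j)
      exact this.eventually (gt_mem_nhds (by positivity))
    obtain ⟨m, hm⟩ := hm.exists
    have hz : ∀ᶠ z in l, ∀ i j, ‖cp.Phi z ((c m * b.map cp.ι * star (c m)) i j) -
        ((c m).map (cp.Phi z) * b * star ((c m).map (cp.Phi z))) i j‖ < ε / 2 := by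
      rw [eventually_all]
      intro i
      rw [eventually_all]
      intro j
      have := tendsto_finsetSum Finset.univ fun k (_ : k ∈ Finset.univ) =>
        tendsto_finsetSum Finset.univ fun q (_ : q ∈ Finset.univ) =>
          cp.triple_tendsto hl (c m i q) (c m j k) (b q k)
      simp only [Finset.sum_const_zero] at this
      have := (tendsto_zero_iff_norm_tendsto_zero.1 this).eventually
        (gt_mem_nhds (show (0 : ℝ) < ε / 2 by positivity))
      filter_upwards [this] with z hz
      rw [triple_apply, triple_apply]
      simpa only [map_sum, Finset.sum_sub_distrib, Matrix.map_apply] using hz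
    obtain ⟨z, hz⟩ := hz.exists
    refine ⟨(c m).map (cp.Phi z), fun i j => ?_⟩
    have h1 := hz i j
    have h2 := cp.Phi_norm z ((c m * b.map cp.ι * star (c m)) i j - cp.ι (a i j))
    rw [map_sub, cp.Phi_iota] at h2
    have h3 := hm i j
    rw [lt_div_iff₀ hN] at h3
    have h4 := norm_sub_le_norm_sub_add_norm_sub
      (((c m).map (cp.Phi z) * b * star ((c m).map (cp.Phi z))) i j)
      (cp.Phi z ((c m * b.map cp.ι * star (c m)) i j)) (a i j)
    rw [norm_sub_rev] at h1
    linarith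
  choose d hd using fun m : ℕ => key (1 / ((m : ℝ) + 1)) (by positivity)
  refine ⟨d, ?_⟩
  refine tendsto_pi_nhds.2 fun i => tendsto_pi_nhds.2 fun j => ?_
  rw [tendsto_iff_norm_sub_tendsto_zero]
  exact squeeze_zero (fun _ => norm_nonneg _) (fun m => hd m i j)
    tendsto_one_div_add_atTop_nhds_zero_nat

end Descent

/-- Let `A` be a stably finite unital C*-algebra, `G` a finite group, and
`α : G → Aut(A)` strictly approximately inner.  Then
`rc(A) ≤ rc(C*(G, A, α))`. -/
theorem radiusOfComparison_le_crossedProduct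
    {G : Type*} [Group G] [Fintype G] {A B : Type*} [CStarAlgebra A] [CStarAlgebra B]
    (α : G → (A ≃⋆ₐ[ℂ] A))
    (hα : ∀ (g h : G) (a : A), α (g * h) a = α g (α h a))
    (cp : CrossedProduct G A B (fun g a => α g a))
    (hsai : StrictlyApproxInner (fun g a => α g a))
    (hsf : StablyFinite A) :
    radiusOfComparison A ≤ radiusOfComparison B := by
  refine sInf_le_sInf ?_
  rintro x ⟨r, hr, rfl, hB⟩
  refine ⟨r, hr, rfl, ?_⟩
  intro n a b ha hb hab
  refine cp.descend hsai a b (hB n _ _ ?_ ?_ ?_)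
  · obtain ⟨c, rfl⟩ := ha
    exact ⟨c.map cp.ι, by rw [mapMul, mapStar]⟩
  · obtain ⟨c, rfl⟩ := hb
    exact ⟨c.map cp.ι, by rw [mapMul, mapStar]⟩
  · intro σ da db h1 h2
    exact hab (σ.restrict cp.ι) da db (hasDim_restrict σ cp.ι a ha da h1)
      (hasDim_restrict σ cp.ι b hb db h2)
end

section
/- Let $A$ be a unital C*-algebra, let $G$ be a finite group, and let $\alpha: G \to \mathrm{Aut}(A)$ be an action such that for every finite set $F \subset A$ and every $\varepsilon > 0$ there are unitaries $z_g \in U(A)$ ($g \in G$) with $\|\alpha_g(a) - z_g a z_g^*\| < \varepsilon$ for all $g \in G, a \in F$, and $\|z_g z_h - z_{gh}\| < \varepsilon$ for all $g, h \in G$. Then for every finite set $F \subset A$ and every $\varepsilon > 0$ there is an exact group homomorphism $g \mapsto w_g$ from $G$ to $U(A)$ such that $\|\alpha_g(a) - w_g a w_g^*\| < \varepsilon$ for all $g \in G$ and $a \in F$. -/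
namespace ApproxHom

variable {G : Type*} [Group G] [Fintype G] {A : Type*} [CStarAlgebra A]

/-- multiplicativity defect -/
def defect (ρ : G → A) (g h : G) : A := ρ (g * h) - ρ g * ρ h

/-- Newton correction -/
noncomputable def corr (ρ : G → A) (g : G) : A :=
  ((Fintype.card G : ℂ)⁻¹) • ∑ h, defect ρ g h * ρ h⁻¹

/-- Newton step -/
noncomputable def newton (ρ : G → A) (g : G) : A := ρ g + corr ρ g

lemma norm_avg_le (f : G → A) (C : ℝ) (hf : ∀ h, ‖f h‖ ≤ C) :
    ‖((Fintype.card G : ℂ)⁻¹) • ∑ h, f h‖ ≤ C := by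
  have hn : (0 : ℝ) < Fintype.card G := by exact_mod_cast Fintype.card_pos
  rw [norm_smul, norm_inv, Complex.norm_natCast]
  have h1 : ‖∑ h, f h‖ ≤ Fintype.card G * C := by
    refine (norm_sum_le_of_le _ (fun h _ => hf h)).trans ?_
    simp
  rw [inv_mul_le_iff₀ hn]
  exact h1

lemma avg_const (x : A) : ((Fintype.card G : ℂ)⁻¹) • ∑ _h : G, x = x := by
  have hn : (Fintype.card G : ℂ) ≠ 0 := by exact_mod_cast Fintype.card_ne_zero
  rw [Finset.sum_const, Finset.card_univ, ← Nat.cast_smul_eq_nsmul ℂ, smul_smul,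
    inv_mul_cancel₀ hn, one_smul]

lemma defect_newton (ρ : G → A) (h1 : ρ 1 = 1) (a b : G) :
    defect (newton ρ) a b = ((Fintype.card G : ℂ)⁻¹) • ∑ h,
      (defect ρ a b * defect ρ h h⁻¹ + defect ρ a h * defect ρ h⁻¹ b)
      - corr ρ a * corr ρ b := by
  have key : defect ρ a b + corr ρ (a * b) - ρ a * corr ρ b - corr ρ a * ρ b
      = ((Fintype.card G : ℂ)⁻¹) • ∑ h,
      (defect ρ a b * defect ρ h h⁻¹ + defect ρ a h * defect ρ h⁻¹ b) := by
    have e0 : ∑ h, defect ρ a h * ρ (h⁻¹ * b) = ∑ h, defect ρ a (b * h) * ρ h⁻¹ := by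
      rw [← Equiv.sum_comp (Equiv.mulLeft b)]
      refine Finset.sum_congr rfl fun h _ => ?_
      simp
    have e1 : ∑ h, defect ρ a h * defect ρ h⁻¹ b
        = ∑ h, (defect ρ a (b * h) * ρ h⁻¹ - defect ρ a h * ρ h⁻¹ * ρ b) := by
      rw [Finset.sum_sub_distrib, ← e0, ← Finset.sum_sub_distrib]
      refine Finset.sum_congr rfl fun h _ => ?_
      rw [defect.eq_def ρ h⁻¹ b, mul_sub, mul_assoc]
    nth_rewrite 1 [← avg_const (G := G) (defect ρ a b)]
    simp only [corr]
    rw [mul_smul_comm, smul_mul_assoc, ← smul_add, ← smul_sub, ← smul_sub, Finset.mul_sum,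
      Finset.sum_mul, ← Finset.sum_add_distrib, ← Finset.sum_sub_distrib, ← Finset.sum_sub_distrib,
      Finset.sum_add_distrib (g := fun h => defect ρ a h * defect ρ h⁻¹ b), e1,
      ← Finset.sum_add_distrib]
    congr 1
    refine Finset.sum_congr rfl fun h _ => ?_
    simp only [defect, mul_inv_cancel, h1, mul_assoc]
    noncomm_ring
  rw [← key]
  simp only [newton, defect]
  noncomm_ring

lemma newton_one (ρ : G → A) (h1 : ρ 1 = 1) : newton ρ 1 = 1 := by
  simp [newton, corr, defect, h1]

lemma corr_norm (ρ : G → A) (d : ℝ) (hd : ∀ g h, ‖defect ρ g h‖ ≤ d)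
    (hM : ∀ g, ‖ρ g‖ ≤ 2) (g : G) : ‖corr ρ g‖ ≤ 2 * d := by
  refine norm_avg_le _ _ fun h => ?_
  have := norm_mul_le_of_le (hd g h) (hM h⁻¹)
  linarith

lemma newton_defect_norm (ρ : G → A) (h1 : ρ 1 = 1) (d : ℝ) (hd : ∀ g h, ‖defect ρ g h‖ ≤ d)
    (hM : ∀ g, ‖ρ g‖ ≤ 2) (a b : G) : ‖defect (newton ρ) a b‖ ≤ 6 * d ^ 2 := by
  rw [defect_newton ρ h1]
  have e1 := norm_avg_le (fun h => defect ρ a b * defect ρ h h⁻¹ + defect ρ a h * defect ρ h⁻¹ b)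
    (2 * d ^ 2) (fun h => by
      have := norm_add_le_of_le (norm_mul_le_of_le (hd a b) (hd h h⁻¹))
        (norm_mul_le_of_le (hd a h) (hd h⁻¹ b))
      linarith)
  have e2 := norm_mul_le_of_le (corr_norm ρ d hd hM a) (corr_norm ρ d hd hM b)
  have := norm_sub_le_of_le e1 e2
  linarith

lemma iter_bounds (ρ : G → A) (h1 : ρ 1 = 1) (d : ℝ) (hd12 : d ≤ 1 / 12)
    (hd : ∀ g h, ‖defect ρ g h‖ ≤ d) (hM : ∀ g, ‖ρ g‖ ≤ 1) (k : ℕ) :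
    (newton^[k] ρ) 1 = 1 ∧ (∀ g h, ‖defect (newton^[k] ρ) g h‖ ≤ d * (1 / 2) ^ k) ∧
    (∀ g, ‖(newton^[k] ρ) g‖ ≤ 1 + 4 * d * (1 - (1 / 2) ^ k)) := by
  have hd0 : 0 ≤ d := (norm_nonneg _).trans (hd 1 1)
  induction k with
  | zero => simpa [h1, hM] using hd
  | succ k ih =>
    obtain ⟨i1, i2, i3⟩ := ih
    have hp : (0 : ℝ) < (1 / 2) ^ k := by positivity
    have hp1 : ((1 : ℝ) / 2) ^ k ≤ 1 := pow_le_one₀ (by norm_num) (by norm_num)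
    have i4 : ∀ g, ‖(newton^[k] ρ) g‖ ≤ 2 := fun g => (i3 g).trans (by nlinarith)
    rw [Function.iterate_succ_apply']
    refine ⟨newton_one _ i1, fun g h => ?_, fun g => ?_⟩
    · refine (newton_defect_norm _ i1 _ i2 i4 g h).trans ?_
      rw [pow_succ (1 / 2 : ℝ) k]
      have : d * (1 / 2) ^ k ≤ 1 / 12 := by nlinarith
      have h0 : 0 ≤ d * (1 / 2) ^ k := by positivity
      nlinarith
    · have := norm_add_le_of_le (i3 g) (corr_norm _ _ i2 i4 g)
      refine this.trans ?_
      rw [pow_succ]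
      linarith

lemma exists_hom (ρ : G → A) (h1 : ρ 1 = 1) (d : ℝ) (hd12 : d ≤ 1 / 12)
    (hd : ∀ g h, ‖defect ρ g h‖ ≤ d) (hM : ∀ g, ‖ρ g‖ ≤ 1) :
    ∃ σ : G → A, σ 1 = 1 ∧ (∀ g h, σ (g * h) = σ g * σ h) ∧ ∀ g, ‖σ g - ρ g‖ ≤ 4 * d := by
  have hd0 : 0 ≤ d := (norm_nonneg _).trans (hd 1 1)
  have B := iter_bounds ρ h1 d hd12 hd hM
  have hstep : ∀ g k, dist ((newton^[k] ρ) g) ((newton^[k+1] ρ) g) ≤ (4 * d) / 2 / 2 ^ k := by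
    intro g k
    obtain ⟨i1, i2, i3⟩ := B k
    have hp : (0 : ℝ) < (1 / 2) ^ k := by positivity
    have i4 : ∀ g, ‖(newton^[k] ρ) g‖ ≤ 2 := fun g => (i3 g).trans (by nlinarith)
    have := corr_norm _ _ i2 i4 g
    rw [Function.iterate_succ_apply', dist_comm, dist_eq_norm]
    simp only [newton, add_sub_cancel_left]
    refine this.trans (le_of_eq ?_)
    rw [one_div, inv_pow]; ring
  have hlim : ∀ g, ∃ x, Filter.Tendsto (fun k => (newton^[k] ρ) g) Filter.atTop (nhds x) :=
    fun g => cauchySeq_tendsto_of_complete (cauchySeq_of_le_geometric_two (hstep g))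
  choose σ hσ using hlim
  refine ⟨σ, ?_, fun g h => ?_, fun g => ?_⟩
  · refine tendsto_nhds_unique (hσ 1) ?_
    simp [(B _).1]
  · have t1 := (hσ (g * h)).sub ((hσ g).mul (hσ h))
    have t2 : Filter.Tendsto (fun k => defect (newton^[k] ρ) g h) Filter.atTop (nhds 0) := by
      refine squeeze_zero_norm (fun k => (B k).2.1 g h) ?_
      simpa using (tendsto_pow_atTop_nhds_zero_of_lt_one (r := (1/2 : ℝ)) (by norm_num)
        (by norm_num)).const_mul d
    exact sub_eq_zero.1 (tendsto_nhds_unique t1 t2)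
  · have := dist_le_of_le_geometric_two_of_tendsto₀ (hstep g) (hσ g)
    rwa [dist_comm, dist_eq_norm] at this

lemma exists_sqrt (S : A) (hS : IsSelfAdjoint S) (c : ℝ) (hc : c ≤ 1 / 2) (hSc : ‖S - 1‖ ≤ c) :
    ∃ T : A, IsSelfAdjoint T ∧ T * T = S ∧ ‖T - 1‖ ≤ c := by
  have hc0 : 0 ≤ c := (norm_nonneg _).trans hSc
  have hspec : ∀ x ∈ spectrum ℝ S, |x - 1| ≤ c := by
    have e : cfc (fun x : ℝ => x - 1) S = S - 1 := by
      rw [cfc_sub (fun x : ℝ => x) (fun _ => (1 : ℝ)) S, cfc_id' ℝ S, cfc_const_one ℝ S]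
    rw [← e] at hSc
    intro x hx
    exact (norm_cfc_le_iff (fun x : ℝ => x - 1) S hc0).1 hSc x hx
  have hpos : ∀ x ∈ spectrum ℝ S, 0 ≤ x := fun x hx => by
    have := abs_le.1 (hspec x hx); linarith
  refine ⟨cfc Real.sqrt S, cfc_predicate _ _, ?_, ?_⟩
  · rw [← cfc_mul Real.sqrt Real.sqrt S]
    conv_rhs => rw [← cfc_id' ℝ S]
    exact cfc_congr fun x hx => Real.mul_self_sqrt (hpos x hx)
  · have e : cfc (fun x : ℝ => Real.sqrt x - 1) S = cfc Real.sqrt S - 1 := by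
      rw [cfc_sub Real.sqrt (fun _ => (1 : ℝ)) S, cfc_const_one ℝ S]
    rw [← e]
    refine norm_cfc_le hc0 fun x hx => ?_
    refine le_trans ?_ (hspec x hx)
    have h0 := Real.sqrt_nonneg x
    have h2 := Real.mul_self_sqrt (hpos x hx)
    rw [Real.norm_eq_abs]
    have : x - 1 = (Real.sqrt x - 1) * (Real.sqrt x + 1) := by linarith
    rw [this, abs_mul, abs_of_nonneg (by linarith : 0 ≤ Real.sqrt x + 1)]
    nlinarith [abs_nonneg (Real.sqrt x - 1)]

lemma norm_unitary_le (u : unitary A) : ‖(u : A)‖ ≤ 1 := by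
  rcases subsingleton_or_nontrivial A with h | h
  · rw [Subsingleton.elim (u : A) 0]; simp
  · exact (CStarRing.norm_coe_unitary u).le

lemma unitarize (σ : G → A) (h1 : σ 1 = 1) (hm : ∀ g h, σ (g * h) = σ g * σ h)
    (z : G → unitary A) (d : ℝ) (hd : d ≤ 1 / 10) (hz : ∀ g, ‖σ g - z g‖ ≤ d) :
    ∃ w : G →* unitary A, ∀ g, ‖(w g : A) - z g‖ ≤ 10 * d := by
  have hd0 : 0 ≤ d := (norm_nonneg _).trans (hz 1)
  have hσn : ∀ g, ‖σ g‖ ≤ 2 := fun g => by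
    have := norm_add_le_of_le (hz g) (norm_unitary_le (z g))
    rw [sub_add_cancel] at this
    linarith
  set S : A := ((Fintype.card G : ℂ)⁻¹) • ∑ h, star (σ h) * σ h with hSdef
  have hS : IsSelfAdjoint S := by
    rw [isSelfAdjoint_iff, hSdef, star_smul, star_sum]
    simp
  have hinv : ∀ g, star (σ g) * S * σ g = S := by
    intro g
    rw [hSdef, mul_smul_comm, smul_mul_assoc, Finset.mul_sum, Finset.sum_mul]
    congr 1
    rw [← Equiv.sum_comp (Equiv.mulRight g) (fun h => star (σ h) * σ h)]
    refine Finset.sum_congr rfl fun h _ => ?_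
    simp [hm, mul_assoc]
  have hS1 : ‖S - 1‖ ≤ 3 * d := by
    have e : S - 1 = ((Fintype.card G : ℂ)⁻¹) • ∑ h, (star (σ h) * σ h - 1) := by
      rw [Finset.sum_sub_distrib, smul_sub, avg_const]
    rw [e]
    refine norm_avg_le _ _ fun h => ?_
    have hu : star (z h : A) * z h = 1 := Unitary.coe_star_mul_self (z h)
    have e2 : star (σ h) * σ h - 1 = star (σ h - z h) * σ h + star (z h : A) * (σ h - z h) := by
      rw [star_sub, sub_mul, mul_sub, hu]; abel
    rw [e2]
    have := norm_add_le_of_le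
      (norm_mul_le_of_le (le_of_eq_of_le (norm_star _) (hz h)) (hσn h))
      (norm_mul_le_of_le (le_of_eq_of_le (norm_star _) (norm_unitary_le (z h))) (hz h))
    linarith
  obtain ⟨T, hTs, hTT, hT1⟩ := exists_sqrt S hS (3 * d) (by linarith) hS1
  have hTu : IsUnit T := by
    have := (Units.oneSub (1 - T) (by rw [norm_sub_rev]; linarith)).isUnit
    simpa using this
  obtain ⟨U, rfl⟩ := hTu
  have hUs : star (↑U⁻¹ : A) = ↑U⁻¹ := by
    have : star (U⁻¹) = U⁻¹ := by
      rw [star_inv]; congr 1; exact Units.ext hTs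
    exact congrArg Units.val this
  let v : G → A := fun g => U * σ g * ↑U⁻¹
  have hv1 : v 1 = 1 := by simp [v, h1]
  have hvm : ∀ g h, v (g * h) = v g * v h := fun g h => by
    simp [v, hm, mul_assoc]
  have hvu : ∀ g, star (v g) * v g = 1 := fun g => by
    have hT' : star (U : A) = U := hTs
    have : star (v g) * v g = ↑U⁻¹ * (star (σ g) * (↑U * ↑U) * σ g) * ↑U⁻¹ := by
      simp only [v, star_mul, hUs, hT', mul_assoc]
    rw [this, hTT, hinv, ← hTT]
    simp
  have hvu' : ∀ g, v g * star (v g) = 1 := fun g => by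
    have i1 : v g * v g⁻¹ = 1 := by rw [← hvm, mul_inv_cancel, hv1]
    have : star (v g) = v g⁻¹ := left_inv_eq_right_inv (hvu g) i1
    rw [this, i1]
  let w : G →* unitary A :=
    { toFun := fun g => ⟨v g, Unitary.mem_iff.2 ⟨hvu g, hvu' g⟩⟩
      map_one' := Subtype.ext hv1
      map_mul' := fun g h => Subtype.ext (hvm g h) }
  refine ⟨w, fun g => ?_⟩
  have hw : (w g : A) = v g := rfl
  have hvn := norm_unitary_le (w g)
  have hcomm : v g * U = U * σ g := by simp [v]
  have e : (w g : A) - z g = -(w g * ((U : A) - 1)) + ((U : A) - 1) * σ g + (σ g - z g) := by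
    rw [hw, mul_sub, sub_mul, hcomm]; noncomm_ring
  rw [e]
  have := norm_add_le_of_le (norm_add_le_of_le
    (le_of_eq_of_le (norm_neg _) (norm_mul_le_of_le hvn hT1))
    (norm_mul_le_of_le hT1 (hσn g))) (hz g)
  linarith

lemma stability (z : G → unitary A) (d : ℝ) (hd : d ≤ 1 / 100)
    (hz : ∀ g h, ‖(z g : A) * z h - z (g * h)‖ ≤ d) :
    ∃ w : G →* unitary A, ∀ g, ‖(w g : A) - z g‖ ≤ 90 * d := by
  let u : A := star (z 1 : A)
  have hu : u * z 1 = 1 := Unitary.coe_star_mul_self (z 1)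
  have hun : ‖u‖ ≤ 1 := le_of_eq_of_le (norm_star _) (norm_unitary_le (z 1))
  have hu1 : ‖u - 1‖ ≤ d := by
    have h := hz 1 1
    rw [mul_one] at h
    have e : u - 1 = -(u * (u * (z 1 * z 1 - z 1))) := by
      rw [mul_sub, ← mul_assoc u, hu, one_mul, mul_sub, hu, mul_one]; simp
    rw [e, norm_neg]
    have := norm_mul_le_of_le hun (norm_mul_le_of_le hun h)
    linarith
  let ρ : G → A := fun g => u * z g
  have hρz : ∀ g, ‖ρ g - z g‖ ≤ d := fun g => by
    have e : ρ g - z g = (u - 1) * z g := by simp [ρ, sub_mul]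
    rw [e]
    have := norm_mul_le_of_le hu1 (norm_unitary_le (z g))
    linarith
  have hdef : ∀ g h, ‖defect ρ g h‖ ≤ 2 * d := fun g h => by
    have e : defect ρ g h = -(u * ((z g * z h - z (g * h)) + z g * ((u - 1) * z h))) := by
      simp only [defect, ρ]; noncomm_ring
    rw [e, norm_neg]
    have := norm_mul_le_of_le hun (norm_add_le_of_le (hz g h)
      (norm_mul_le_of_le (norm_unitary_le (z g)) (norm_mul_le_of_le hu1 (norm_unitary_le (z h)))))
    linarith
  have hρn : ∀ g, ‖ρ g‖ ≤ 1 := fun g => by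
    have := norm_mul_le_of_le hun (norm_unitary_le (z g))
    rwa [one_mul] at this
  obtain ⟨σ, s1, s2, s3⟩ := exists_hom ρ hu (2 * d) (by linarith) hdef hρn
  obtain ⟨w, hw⟩ := unitarize σ s1 s2 z (9 * d) (by linarith) (fun g => by
    have := norm_add_le_of_le (s3 g) (hρz g)
    rw [sub_add_sub_cancel] at this
    linarith)
  exact ⟨w, fun g => (hw g).trans (by linarith)⟩

end ApproxHom


/-- Let `A` be a unital C*-algebra, `G` a finite group, and
`α : G → Aut(A)` an action such that for every finite `F ⊆ A` and `ε > 0` there are unitaries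
`z_g` with `‖α_g(a) - z_g a z_g*‖ < ε` for `a ∈ F` and `‖z_g z_h - z_{gh}‖ < ε` for all
`g, h`.  Then for every finite `F ⊆ A` and `ε > 0` there is an exact group homomorphism
`g ↦ w_g` into the unitary group with `‖α_g(a) - w_g a w_g*‖ < ε` for `g ∈ G`, `a ∈ F`. -/
theorem approx_hom_upgrades_to_hom
    {G : Type*} [Group G] [Fintype G] {A : Type*} [CStarAlgebra A]
    (α : G → (A ≃⋆ₐ[ℂ] A))
    (hα : ∀ (g h : G) (a : A), α (g * h) a = α g (α h a))
    (happrox : ∀ (F : Finset A) (ε : ℝ), 0 < ε → ∃ z : G → unitary A,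
      (∀ g : G, ∀ a ∈ F, ‖α g a - (z g : A) * a * star ((z g : A))‖ < ε) ∧
      (∀ g h : G, ‖(z g : A) * (z h : A) - ((z (g * h) : A))‖ < ε)) :
    ∀ (F : Finset A) (ε : ℝ), 0 < ε → ∃ w : G →* unitary A,
      ∀ g : G, ∀ a ∈ F, ‖α g a - (w g : A) * a * star ((w g : A))‖ < ε := by
  intro F ε hε
  set M : ℝ := ∑ a ∈ F, ‖a‖ with hM
  have hM0 : 0 ≤ M := Finset.sum_nonneg fun _ _ => norm_nonneg _
  have hK : 0 < 1 + 180 * M := by linarith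
  obtain ⟨z, hz1, hz2⟩ := happrox F (min (1 / 100) (ε / (1 + 180 * M)))
    (lt_min (by norm_num) (div_pos hε hK))
  set d := min (1 / 100) (ε / (1 + 180 * M)) with hd
  have hd1 : d ≤ 1 / 100 := min_le_left _ _
  have hd2 : d * (1 + 180 * M) ≤ ε := (le_div_iff₀ hK).1 (min_le_right _ _)
  have hd0 : 0 < d := lt_min (by norm_num) (div_pos hε hK)
  obtain ⟨w, hw⟩ := ApproxHom.stability z d hd1 (fun g h => (hz2 g h).le)
  refine ⟨w, fun g a ha => ?_⟩
  have haM : ‖a‖ ≤ M := Finset.single_le_sum (f := fun a => ‖a‖) (fun _ _ => norm_nonneg _) ha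
  have e : α g a - (w g : A) * a * star (w g : A) = (α g a - (z g : A) * a * star (z g : A))
      + -((((w g : A) - z g) * a) * star (w g : A) + (z g : A) * a * star ((w g : A) - z g)) := by
    rw [star_sub]; noncomm_ring
  rw [e]
  have h1 := norm_add_le_of_le
    (norm_mul_le_of_le (norm_mul_le_of_le (hw g) haM)
      (le_of_eq_of_le (norm_star _) (ApproxHom.norm_unitary_le (w g))))
    (norm_mul_le_of_le (norm_mul_le_of_le (ApproxHom.norm_unitary_le (z g)) haM)
      (le_of_eq_of_le (norm_star _) (hw g)))
  have h2 := norm_add_le (α g a - (z g : A) * a * star (z g : A))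
    (-((((w g : A) - z g) * a) * star (w g : A) + (z g : A) * a * star ((w g : A) - z g)))
  rw [norm_neg] at h2
  have h3 := hz1 g a ha
  nlinarith
end
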